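/- Let q = p^m ≡ 5 (mod 8) be a prime power with primitive element α of F_q, and let q = s² + t² be the Katre–Rajwade-normalized representation. Then D = {C_0^4, C_3^4} is: (i) if t = −2, a (q,2,(q−1)/4;(q−5)/8,(q+3)/8)-EPDF relative to C_0^2 and a (q,2,(q−1)/4,(q−5)/8)-DDF; (ii) if t = 2, a (q,2,(q−1)/4;(q+3)/8,(q−5)/8)-EPDF relative to C_0^2 and a (q,2,(q−1)/4,(q−5)/8)-DDF. -/

import Mathlib

open Finset

section Defs

variable {G : Type*} [AddCommGroup G] [Fintype G] [DecidableEq G]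

/-- The multiset `Δ(D)` of internal differences `x - y` (for `x ≠ y` in `D`). -/
def intDiff (D : Finset G) : Multiset G :=
  ((D ×ˢ D).filter (fun p => p.1 ≠ p.2)).val.map (fun p => p.1 - p.2)

/-- The multiset `Δ(D, E)` of external differences `x - y` for `x ∈ D`, `y ∈ E`. -/
def extDiff (D E : Finset G) : Multiset G :=
  (D ×ˢ E).val.map (fun p => p.1 - p.2)

/-- The finset `G^*` of nonzero elements of `G`. -/
def Gstar (G : Type*) [AddCommGroup G] [Fintype G] [DecidableEq G] : Finset G :=
  Finset.univ.erase 0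

/-- `A` is a `(v, k, lam, mu)` partial difference set in `G`:
`Δ(A) = lam • A^* + mu • (G^* \ A)`. -/
def IsPDS (A : Finset G) (v k lam mu : ℕ) : Prop :=
  Fintype.card G = v ∧ A.card = k ∧
    intDiff A = lam • (A.erase 0).val + mu • (Gstar G \ A).val

/-- `D` is a `(v, k, lam, mu)` skew partial difference set corresponding to the
`(v, k, lam, mu)`-PDS `A`: `Δ(D) = lam • A^* + mu • (G^* \ A)`. -/
def IsSkewPDS (D A : Finset G) (v k lam mu : ℕ) : Prop :=
  IsPDS A v k lam mu ∧ D.card = k ∧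
    intDiff D = lam • (A.erase 0).val + mu • (Gstar G \ A).val

/-- `D` is an `(n, m, k₁, …, k_m; lam, mu)` disjoint partial difference family relative
to `T`: the `D i` are pairwise disjoint subsets of `G^*` of sizes `k i`, and
`∑ i, Δ(D i) = lam • T + mu • (G^* \ T)`. -/
def IsDPDF {ι : Type*} [Fintype ι] (D : ι → Finset G) (n m : ℕ) (k : ι → ℕ)
    (T : Finset G) (lam mu : ℕ) : Prop :=
  Fintype.card G = n ∧ Fintype.card ι = m ∧
    (∀ i, (0 : G) ∉ D i) ∧ (∀ i, (D i).card = k i) ∧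
    (Pairwise (fun i j => Disjoint (D i) (D j))) ∧
    ∑ i, intDiff (D i) = lam • T.val + mu • (Gstar G \ T).val

/-- `D` is an `(n, m, k₁, …, k_m; lam, mu)` external partial difference family relative
to `T`: the `D i` are pairwise disjoint subsets of `G^*` of sizes `k i`, and
`∑_{i ≠ j}, Δ(D i, D j) = lam • T + mu • (G^* \ T)`. -/
def IsEPDF {ι : Type*} [Fintype ι] [DecidableEq ι] (D : ι → Finset G) (n m : ℕ)
    (k : ι → ℕ) (T : Finset G) (lam mu : ℕ) : Prop :=
  Fintype.card G = n ∧ Fintype.card ι = m ∧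
    (∀ i, (0 : G) ∉ D i) ∧ (∀ i, (D i).card = k i) ∧
    (Pairwise (fun i j => Disjoint (D i) (D j))) ∧
    ∑ i, ∑ j ∈ Finset.univ.erase i, extDiff (D i) (D j)
      = lam • T.val + mu • (Gstar G \ T).val

/-- `D` is an `(n, m, k₁, …, k_m, lam)` disjoint difference family:
`∑ i, Δ(D i) = lam • G^*`. -/
def IsDDF {ι : Type*} [Fintype ι] (D : ι → Finset G) (n m : ℕ) (k : ι → ℕ)
    (lam : ℕ) : Prop :=
  Fintype.card G = n ∧ Fintype.card ι = m ∧
    (∀ i, (0 : G) ∉ D i) ∧ (∀ i, (D i).card = k i) ∧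
    (Pairwise (fun i j => Disjoint (D i) (D j))) ∧
    ∑ i, intDiff (D i) = lam • (Gstar G).val

/-- `D` is an `(n, m, k₁, …, k_m, lam)` external difference family:
`∑_{i ≠ j}, Δ(D i, D j) = lam • G^*`. -/
def IsEDF {ι : Type*} [Fintype ι] [DecidableEq ι] (D : ι → Finset G) (n m : ℕ)
    (k : ι → ℕ) (lam : ℕ) : Prop :=
  Fintype.card G = n ∧ Fintype.card ι = m ∧
    (∀ i, (0 : G) ∉ D i) ∧ (∀ i, (D i).card = k i) ∧
    (Pairwise (fun i j => Disjoint (D i) (D j))) ∧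
    ∑ i, ∑ j ∈ Finset.univ.erase i, extDiff (D i) (D j) = lam • (Gstar G).val

end Defs

section Cyclotomy

variable {F : Type*} [Field F] [Fintype F] [DecidableEq F]

/-- The cyclotomic class `C_i^e = α^i ⟨α^e⟩` of order `e` in the finite field `F`,
with respect to the primitive element `α`.  (Since `α` has multiplicative order at most
`|F| - 1`, letting `j` range over `0, …, |F| - 1` captures the whole class.) -/
def cycClass (α : F) (e i : ℕ) : Finset F :=
  (Finset.range (Fintype.card F)).image (fun j => α ^ (e * j + i))

/-- `α` is a primitive element of the finite field `F`: every nonzero element of `F`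
is a power of `α`. -/
def IsPrimitiveElt (α : F) : Prop :=
  ∀ x : F, x ≠ 0 → ∃ n : ℕ, α ^ n = x

end Cyclotomy

/-!
Since `q ≡ 5 (mod 8)`, `-1` lies in `C_2^4`. Hence the internal differences of `C_0^4` and `C_3^4`
form together a multiset invariant under multiplication by `α`, so a multiple of `F^*`, and the
cardinality gives the multiplicity. The external differences are only invariant under
multiplication by `α²`, so they are `λ • C_0^2 + μ • C_1^2`; here the cardinality gives `λ + μ`,
and summing the quadratic character `η` over them gives `λ - μ = S_3`, where `S_i` is the sum of
`η (1 - x)` over `x ∈ C_i^4`.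

To evaluate `S_3`, note that `(S_0 - S_2) - 2 S_3 I` is the Jacobi sum of a quartic character with
`η`, whose norm gives `q = (S_0 - S_2)² + (2 S_3)²`, with `S_0 - S_2 ≡ 1 (mod 4)`.
Modulo `p` the Jacobi sum reduces to a power sum `∑ x, x ^ a * (1 - x) ^ b`, a binomial coefficient
prime to `p`, and this identifies the representation with `q = s² + t²`: `2 S_3 = t`.
-/

open scoped Pointwise

section Differences

variable {G : Type*} [AddCommGroup G]

lemma extDiff_swap (D E : Finset G) : extDiff E D = (extDiff D E).map Neg.neg := by
  simp only [extDiff, product_val]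
  rw [← Multiset.map_swap_product]
  simp only [Multiset.map_map, Function.comp_def, Prod.fst_swap, Prod.snd_swap, neg_sub]

lemma card_extDiff (D E : Finset G) : Multiset.card (extDiff D E) = #D * #E := by
  simp [extDiff]

lemma zero_notMem_extDiff {D E : Finset G} (h : Disjoint D E) : 0 ∉ extDiff D E := by
  simp only [extDiff, Multiset.mem_map, mem_val, mem_product, sub_eq_zero]
  rintro ⟨⟨x, y⟩, ⟨hx, hy⟩, hxy⟩
  exact disjoint_left.1 h hx (hxy ▸ hy)

lemma sum_map_extDiff {M : Type*} [AddCommMonoid M] (D E : Finset G) (f : G → M) :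
    ((extDiff D E).map f).sum = ∑ x ∈ D, ∑ y ∈ E, f (x - y) := by
  rw [extDiff, Multiset.map_map, ← sum_product']
  rfl

variable [DecidableEq G]

lemma extDiff_smul {M : Type*} [GroupWithZero M] [DistribMulAction M G] {c : M} (hc : c ≠ 0)
    (D E : Finset G) : extDiff (c • D) (c • E) = (extDiff D E).map (c • ·) := by
  have hinj := MulAction.injective₀ (α := G) hc
  have hprod : (c • D) ×ˢ (c • E) = (D ×ˢ E).image (Prod.map (c • ·) (c • ·)) :=
    (prodMap_image_product _ _ _ _).symm
  rw [extDiff, extDiff, hprod, image_val_of_injOn (hinj.prodMap hinj).injOn, Multiset.map_map,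
    Multiset.map_map]
  simp only [Function.comp_def, Prod.map_fst, Prod.map_snd, smul_sub]

lemma intDiff_eq_filter_extDiff (D : Finset G) : intDiff D = (extDiff D D).filter (· ≠ 0) := by
  simp only [intDiff, extDiff, Multiset.filter_map, Function.comp_def, sub_ne_zero, filter_val]

lemma zero_notMem_intDiff (D : Finset G) : 0 ∉ intDiff D := by
  simp [intDiff_eq_filter_extDiff]

lemma card_intDiff (D : Finset G) : Multiset.card (intDiff D) = #D * #D - #D := by
  have hoffDiag : {p ∈ D ×ˢ D | p.1 ≠ p.2} = D.offDiag := by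
    ext
    simp [and_assoc]
  rw [intDiff, hoffDiag, Multiset.card_map, card_val, offDiag_card]

lemma intDiff_smul {M : Type*} [GroupWithZero M] [DistribMulAction M G] {c : M} (hc : c ≠ 0)
    (D : Finset G) : intDiff (c • D) = (intDiff D).map (c • ·) := by
  have hzero (x : G) : c • x = 0 ↔ x = 0 := (MulAction.injective₀ hc).eq_iff' (smul_zero c)
  simp only [intDiff_eq_filter_extDiff, extDiff_smul hc, Multiset.filter_map, Function.comp_def,
    ne_eq, hzero]

lemma map_neg_intDiff (D : Finset G) : (intDiff D).map Neg.neg = intDiff D := by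
  conv_rhs => rw [intDiff_eq_filter_extDiff, extDiff_swap]
  simp only [intDiff_eq_filter_extDiff, Multiset.filter_map, Function.comp_def, ne_eq, neg_eq_zero]

variable [Fintype G] {D E : Finset G} {k : ℕ}

lemma isDDF_pair (hD0 : 0 ∉ D) (hE0 : 0 ∉ E) (hD : #D = k) (hE : #E = k) (hDE : Disjoint D E)
    {lam : ℕ} (h : intDiff D + intDiff E = lam • (Gstar G).val) :
    IsDDF ![D, E] (Fintype.card G) 2 (fun _ => k) lam :=
  ⟨rfl, rfl, by simp [Fin.forall_fin_two, *], by simp [Fin.forall_fin_two, *],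
    by simp [Pairwise, Fin.forall_fin_two, hDE, hDE.symm], by simpa using h⟩

lemma isEPDF_pair (hD0 : 0 ∉ D) (hE0 : 0 ∉ E) (hD : #D = k) (hE : #E = k) (hDE : Disjoint D E)
    {T : Finset G} {lam mu : ℕ}
    (h : extDiff D E + extDiff E D = lam • T.val + mu • (Gstar G \ T).val) :
    IsEPDF ![D, E] (Fintype.card G) 2 (fun _ => k) T lam mu := by
  have herase₀ : univ.erase (0 : Fin 2) = {1} := by decide
  have herase₁ : univ.erase (1 : Fin 2) = {0} := by decide
  exact ⟨rfl, rfl, by simp [Fin.forall_fin_two, *], by simp [Fin.forall_fin_two, *],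
    by simp [Pairwise, Fin.forall_fin_two, hDE, hDE.symm], by
      simpa [Fin.sum_univ_two, herase₀, herase₁] using h⟩

end Differences

section CyclotomicClasses

variable {F : Type*} [Field F] {α : F}

namespace IsPrimitiveElt

lemma mem_zpowers (hα : IsPrimitiveElt α) (hα0 : α ≠ 0) (u : Fˣ) :
    u ∈ Subgroup.zpowers (Units.mk0 α hα0) := by
  obtain ⟨n, hn⟩ := hα u u.ne_zero
  exact ⟨n, Units.ext (by simpa using hn)⟩

variable [Fintype F]

lemma ne_zero (hα : IsPrimitiveElt α) (hF : 2 < Fintype.card F) : α ≠ 0 := by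
  classical
  rintro rfl
  have hsub : (univ : Finset F) ⊆ {0, 1} := by
    intro x _
    rw [mem_insert, mem_singleton, or_iff_not_imp_left]
    intro hx
    obtain ⟨_ | n, rfl⟩ := hα x hx
    · exact pow_zero 0
    · exact absurd (zero_pow n.succ_ne_zero) hx
  exact ((card_le_card hsub).trans card_le_two).not_gt hF

lemma pow_eq_pow_iff (hα : IsPrimitiveElt α) (hα0 : α ≠ 0) {m n : ℕ} :
    α ^ m = α ^ n ↔ m ≡ n [MOD Fintype.card F - 1] := by
  have horder := orderOf_eq_card_of_forall_mem_zpowers (hα.mem_zpowers hα0)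
  rw [Nat.card_units, Nat.card_eq_fintype_card] at horder
  rw [← horder, ← _root_.pow_eq_pow_iff_modEq, Units.ext_iff]
  simp

lemma pow_eq_neg_one (hα : IsPrimitiveElt α) {n : ℕ} (hn : Fintype.card F = 2 * n + 1) :
    α ^ n = -1 := by
  have hlt := Fintype.one_lt_card (α := F)
  have hα0 := hα.ne_zero (by omega)
  have hsq : (α ^ n) ^ 2 = 1 ^ 2 := by
    rw [one_pow, ← FiniteField.pow_card_sub_one_eq_one α hα0, ← pow_mul']
    congr 1
    omega
  refine (eq_or_eq_neg_of_sq_eq_sq _ _ hsq).resolve_left fun h1 => ?_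
  rw [← pow_zero α, hα.pow_eq_pow_iff hα0, Nat.modEq_zero_iff_dvd] at h1
  have := Nat.le_of_dvd (by omega) h1
  omega

lemma exists_mulChar_apply_eq {R : Type*} [CommRing R] (hα : IsPrimitiveElt α) (hα0 : α ≠ 0)
    {ζ : R} (hζ : ζ ^ (Fintype.card F - 1) = 1) : ∃ χ : MulChar F R, χ α = ζ := by
  classical
  have hcard : Fintype.card F - 1 ≠ 0 := (Nat.sub_pos_of_lt Fintype.one_lt_card).ne'
  let u : Rˣ := Units.ofPowEqOne ζ _ hζ hcard
  have hu : u ∈ rootsOfUnity (Fintype.card Fˣ) R := by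
    rw [mem_rootsOfUnity, Fintype.card_units]
    exact Units.pow_ofPowEqOne hζ hcard
  exact ⟨MulChar.ofRootOfUnity hu (hα.mem_zpowers hα0),
    MulChar.ofRootOfUnity_spec hu (hα.mem_zpowers hα0)⟩

end IsPrimitiveElt

variable [DecidableEq F] {e i j n : ℕ} {x : F}

lemma count_pow_of_map_pow_smul_eq (hα0 : α ≠ 0) {M : Multiset F} (hM : M.map (α ^ e • ·) = M)
    (j i : ℕ) : M.count (α ^ (e * j + i)) = M.count (α ^ i) := by
  have hshift (x : F) : M.count (α ^ e • x) = M.count x := by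
    conv_lhs => rw [← hM]
    exact Multiset.count_map_eq_count' _ _ (MulAction.injective₀ (pow_ne_zero e hα0)) x
  induction j with
  | zero => simp
  | succ j ih =>
    rw [← ih, ← hshift (α ^ (e * j + i)), smul_eq_mul, ← pow_add]
    congr 2
    ring

variable [Fintype F]

lemma mem_cycClass (hα0 : α ≠ 0) : x ∈ cycClass α e i ↔ ∃ j, α ^ (e * j + i) = x := by
  simp only [cycClass, mem_image, mem_range]
  refine ⟨fun ⟨j, _, hj⟩ => ⟨j, hj⟩, fun ⟨j, hj⟩ => ?_⟩
  have hperiod : (α ^ e) ^ (Fintype.card F - 1) = 1 :=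
    FiniteField.pow_card_sub_one_eq_one _ (pow_ne_zero e hα0)
  have hlt := Nat.mod_lt j (Nat.sub_pos_of_lt (Fintype.one_lt_card (α := F)))
  refine ⟨j % (Fintype.card F - 1), by omega, ?_⟩
  rw [← hj, pow_add, pow_add, pow_mul, pow_mul, ← pow_eq_pow_mod j hperiod]

lemma zero_notMem_cycClass (hα0 : α ≠ 0) : 0 ∉ cycClass α e i := by
  rw [mem_cycClass hα0]
  exact fun ⟨_, hj⟩ => pow_ne_zero _ hα0 hj

lemma pow_smul_cycClass (n : ℕ) : α ^ n • cycClass α e i = cycClass α e (i + n) := by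
  simp only [cycClass, ← image_smul, image_image, Function.comp_def, smul_eq_mul, ← pow_add]
  congr! 3
  ring

lemma card_cycClass_eq (hα0 : α ≠ 0) (i j : ℕ) : #(cycClass α e i) = #(cycClass α e j) := by
  have h (n : ℕ) : #(cycClass α e n) = #(cycClass α e 0) := by
    rw [← zero_add n, ← pow_smul_cycClass, card_smul_finset₀ (pow_ne_zero n hα0)]
  rw [h, h j]

lemma pow_mem_cycClass (hα : IsPrimitiveElt α) (hα0 : α ≠ 0) (he : e ∣ Fintype.card F - 1) :
    α ^ n ∈ cycClass α e i ↔ n ≡ i [MOD e] := by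
  rw [mem_cycClass hα0]
  constructor
  · rintro ⟨j, hj⟩
    have hmod := ((hα.pow_eq_pow_iff hα0).1 hj).symm.of_dvd he
    simpa [Nat.ModEq] using hmod
  · intro h
    obtain ⟨d, hd⟩ := he
    have hq : 0 < Fintype.card F - 1 := Nat.sub_pos_of_lt Fintype.one_lt_card
    have hle : i ≤ n + (Fintype.card F - 1) * i := by nlinarith
    have hmod : i ≡ n + (Fintype.card F - 1) * i [MOD e] := by
      rw [hd, mul_assoc]
      simpa [Nat.ModEq] using h.symm
    obtain ⟨j, hj⟩ := (Nat.modEq_iff_dvd' hle).1 hmod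
    refine ⟨j, ?_⟩
    rw [hα.pow_eq_pow_iff hα0, show e * j + i = n + (Fintype.card F - 1) * i by omega]
    simp [Nat.ModEq]

lemma cycClass_congr (hα : IsPrimitiveElt α) (hα0 : α ≠ 0) (he : e ∣ Fintype.card F - 1)
    (hij : i ≡ j [MOD e]) : cycClass α e i = cycClass α e j := by
  ext x
  obtain rfl | hx := eq_or_ne x 0
  · simp [zero_notMem_cycClass hα0]
  · obtain ⟨n, rfl⟩ := hα x hx
    rw [pow_mem_cycClass hα hα0 he, pow_mem_cycClass hα hα0 he]
    exact ⟨fun h => h.trans hij, fun h => h.trans hij.symm⟩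

lemma disjoint_cycClass (hα : IsPrimitiveElt α) (hα0 : α ≠ 0) (he : e ∣ Fintype.card F - 1)
    (hij : ¬ i ≡ j [MOD e]) : Disjoint (cycClass α e i) (cycClass α e j) := by
  rw [disjoint_left]
  intro x hi hj
  obtain ⟨m, rfl⟩ := (mem_cycClass hα0).1 hi
  exact hij (((pow_mem_cycClass hα hα0 he).1 hi).symm.trans ((pow_mem_cycClass hα hα0 he).1 hj))

lemma pairwiseDisjoint_cycClass (hα : IsPrimitiveElt α) (hα0 : α ≠ 0)
    (he : e ∣ Fintype.card F - 1) :
    (range e : Set ℕ).PairwiseDisjoint (cycClass α e) := fun i hi j hj hij =>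
  disjoint_cycClass hα hα0 he fun h =>
    hij (h.eq_of_lt_of_lt (by simpa using hi) (by simpa using hj))

lemma biUnion_cycClass (hα : IsPrimitiveElt α) (hα0 : α ≠ 0) (he : e ∣ Fintype.card F - 1) :
    (range e).biUnion (cycClass α e) = Gstar F := by
  have he0 : 0 < e := Nat.pos_of_dvd_of_pos he (Nat.sub_pos_of_lt Fintype.one_lt_card)
  ext x
  simp only [mem_biUnion, mem_range, Gstar, mem_erase, mem_univ, and_true]
  constructor
  · rintro ⟨i, -, hx⟩ rfl
    exact zero_notMem_cycClass hα0 hx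
  · intro hx
    obtain ⟨n, rfl⟩ := hα x hx
    exact ⟨n % e, Nat.mod_lt n he0, (pow_mem_cycClass hα hα0 he).2 (Nat.mod_modEq n e).symm⟩

lemma sum_cycClass {M : Type*} [AddCommMonoid M] (hα : IsPrimitiveElt α) (hα0 : α ≠ 0)
    (he : e ∣ Fintype.card F - 1) (f : F → M) :
    ∑ i ∈ range e, ∑ x ∈ cycClass α e i, f x = ∑ x ∈ Gstar F, f x := by
  rw [← biUnion_cycClass hα hα0 he, sum_biUnion (pairwiseDisjoint_cycClass hα hα0 he)]

lemma mul_card_cycClass (hα : IsPrimitiveElt α) (hα0 : α ≠ 0) (he : e ∣ Fintype.card F - 1)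
    (i : ℕ) : e * #(cycClass α e i) = Fintype.card F - 1 := by
  calc e * #(cycClass α e i) = ∑ j ∈ range e, #(cycClass α e j) := by
        rw [sum_congr rfl fun j _ => card_cycClass_eq hα0 j i, sum_const, card_range, smul_eq_mul]
    _ = #(Gstar F) := by
        simp only [card_eq_sum_ones, sum_cycClass hα hα0 he]
    _ = Fintype.card F - 1 := by rw [Gstar, card_erase_of_mem (mem_univ _), card_univ]

lemma eq_sum_count_nsmul_cycClass (hα : IsPrimitiveElt α) (hα0 : α ≠ 0)
    (he : e ∣ Fintype.card F - 1) {M : Multiset F} (hM0 : 0 ∉ M) (hM : M.map (α ^ e • ·) = M) :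
    M = ∑ i ∈ range e, M.count (α ^ i) • (cycClass α e i).val := by
  have he0 : 0 < e := Nat.pos_of_dvd_of_pos he (Nat.sub_pos_of_lt Fintype.one_lt_card)
  ext x
  simp only [Multiset.count_sum', Multiset.count_nsmul, Multiset.count_eq_of_nodup (nodup _),
    mem_val, mul_ite, mul_one, mul_zero]
  obtain rfl | hx := eq_or_ne x 0
  · simp [Multiset.count_eq_zero_of_notMem hM0, zero_notMem_cycClass hα0]
  · obtain ⟨n, rfl⟩ := hα x hx
    rw [sum_eq_single_of_mem (n % e) (mem_range.2 (Nat.mod_lt n he0)),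
      if_pos ((pow_mem_cycClass hα hα0 he).2 (Nat.mod_modEq n e).symm)]
    · conv_lhs => rw [← Nat.div_add_mod n e, count_pow_of_map_pow_smul_eq hα0 hM]
    · intro i hi hne
      rw [if_neg]
      intro hmem
      exact hne (((pow_mem_cycClass hα hα0 he).1 hmem).symm ▸
        (Nat.mod_eq_of_lt (mem_range.1 hi)).symm)

end CyclotomicClasses

section CharacterSums

variable {F : Type*} [Field F] [Fintype F] [DecidableEq F] {α : F} {e i j : ℕ} {x : F}

/-- The sum of the quadratic character over the translated class `1 - C_i^e`. -/
def classCharSum (α : F) (e i : ℕ) : ℤ :=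
  ∑ x ∈ cycClass α e i, quadraticChar F (1 - x)

lemma IsPrimitiveElt.quadraticChar_eq_neg_one (hα : IsPrimitiveElt α) (hα0 : α ≠ 0)
    (hF : ringChar F ≠ 2) : quadraticChar F α = -1 := by
  refine (quadraticChar_dichotomy hα0).resolve_left fun h1 => ?_
  obtain ⟨x, hx⟩ := quadraticChar_exists_neg_one hF
  have hx0 : x ≠ 0 := by
    rintro rfl
    simp at hx
  obtain ⟨n, rfl⟩ := hα x hx0
  rw [map_pow, h1, one_pow] at hx
  exact absurd hx (by decide)

lemma quadraticChar_of_mem_cycClass (hα : IsPrimitiveElt α) (hα0 : α ≠ 0) (hF : ringChar F ≠ 2)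
    (he : Even e) (hx : x ∈ cycClass α e i) : quadraticChar F x = (-1) ^ i := by
  obtain ⟨j, rfl⟩ := (mem_cycClass hα0).1 hx
  rw [map_pow, hα.quadraticChar_eq_neg_one hα0 hF, pow_add, (he.mul_right j).neg_one_pow, one_mul]

lemma sum_mul_quadraticChar_one_sub (hα : IsPrimitiveElt α) (hα0 : α ≠ 0)
    (he : e ∣ Fintype.card F - 1) {R : Type*} [CommRing R] (f : F →*₀ R) (hf : f α ^ e = 1) :
    ∑ x, f x * (quadraticChar F (1 - x) : ℤ) = ∑ i ∈ range e, f α ^ i * classCharSum α e i := by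
  calc ∑ x, f x * (quadraticChar F (1 - x) : ℤ)
      = ∑ x ∈ Gstar F, f x * (quadraticChar F (1 - x) : ℤ) := (sum_erase _ (by simp)).symm
    _ = ∑ i ∈ range e, ∑ x ∈ cycClass α e i, f x * (quadraticChar F (1 - x) : ℤ) :=
        (sum_cycClass hα hα0 he _).symm
    _ = ∑ i ∈ range e, f α ^ i * classCharSum α e i := by
        refine sum_congr rfl fun i _ => ?_
        rw [classCharSum, Int.cast_sum, mul_sum]
        refine sum_congr rfl fun x hx => ?_
        obtain ⟨j, rfl⟩ := (mem_cycClass hα0).1 hx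
        rw [map_pow f, pow_add, pow_mul, hf, one_pow, one_mul]

lemma sum_classCharSum (hα : IsPrimitiveElt α) (hα0 : α ≠ 0) (hF : ringChar F ≠ 2)
    (he : e ∣ Fintype.card F - 1) : ∑ i ∈ range e, classCharSum α e i = -1 := by
  have hα1 : (1 : MulChar F ℤ) α = 1 := MulChar.one_apply hα0.isUnit
  have hsum := sum_mul_quadraticChar_one_sub hα hα0 he
    (1 : MulChar F ℤ).toMonoidWithZeroHom (by simp [hα1])
  rw [← jacobiSum_one_nontrivial (quadraticChar_ne_one hF)]
  simpa [jacobiSum, hα1] using hsum.symm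

lemma inv_mem_cycClass (hα : IsPrimitiveElt α) (hα0 : α ≠ 0) (he : e ∣ Fintype.card F - 1)
    (hij : e ∣ i + j) (hx : x ∈ cycClass α e i) : x⁻¹ ∈ cycClass α e j := by
  obtain ⟨m, rfl⟩ := hα x (ne_of_mem_of_not_mem hx (zero_notMem_cycClass hα0))
  obtain ⟨n, hn⟩ := hα (α ^ m)⁻¹ (inv_ne_zero (pow_ne_zero m hα0))
  have hmn : m + n ≡ 0 [MOD e] := by
    refine ((hα.pow_eq_pow_iff hα0).1 ?_).of_dvd he
    rw [pow_add, hn, mul_inv_cancel₀ (pow_ne_zero m hα0), pow_zero]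
  rw [pow_mem_cycClass hα hα0 he] at hx
  rw [← hn, pow_mem_cycClass hα hα0 he]
  exact hx.add_left_cancel (hmn.trans (Nat.modEq_zero_iff_dvd.2 hij).symm)

lemma classCharSum_of_dvd_add (hα : IsPrimitiveElt α) (hα0 : α ≠ 0) (hF : ringChar F ≠ 2)
    (he : e ∣ Fintype.card F - 1) (heven : Even e) (hneg : quadraticChar F (-1) = 1)
    (hij : e ∣ i + j) : classCharSum α e j = (-1) ^ i * classCharSum α e i := by
  rw [classCharSum, classCharSum, mul_sum]
  refine (sum_nbij' Inv.inv Inv.inv (fun x hx => inv_mem_cycClass hα hα0 he hij hx)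
    (fun x hx => inv_mem_cycClass hα hα0 he (add_comm i j ▸ hij) hx)
    (fun x _ => inv_inv x) (fun x _ => inv_inv x) fun x hx => ?_).symm
  have hx0 : x ≠ 0 := ne_of_mem_of_not_mem hx (zero_notMem_cycClass hα0)
  have hfactor : 1 - x = x * (-1) * (1 - x⁻¹) := by
    field_simp
    ring
  rw [← quadraticChar_of_mem_cycClass hα hα0 hF heven hx, hfactor, map_mul, map_mul, hneg, mul_one,
    ← mul_assoc, ← sq, quadraticChar_sq_one hx0, one_mul]

lemma classCharSum_modEq_card (h1 : 1 ∉ cycClass α e i) :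
    classCharSum α e i ≡ #(cycClass α e i) [ZMOD 2] := by
  rw [card_eq_sum_ones, Nat.cast_sum, classCharSum]
  refine Int.ModEq.sum fun x hx => ?_
  have hx1 : 1 - x ≠ 0 := sub_ne_zero.2 (ne_of_mem_of_not_mem hx h1).symm
  obtain h | h := quadraticChar_dichotomy hx1 <;> rw [h] <;> decide

end CharacterSums

section QuarticSums

variable {F : Type*} [Field F] [Fintype F] {α : F}

lemma ringChar_ne_two_of_four_dvd (h4 : 4 ∣ Fintype.card F - 1) : ringChar F ≠ 2 := fun h => by
  have heven := FiniteField.even_card_iff_char_two.1 h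
  have hlt := Fintype.one_lt_card (α := F)
  omega

lemma IsPrimitiveElt.ne_zero_of_four_dvd (hα : IsPrimitiveElt α) (h4 : 4 ∣ Fintype.card F - 1) :
    α ≠ 0 :=
  hα.ne_zero (by have := Fintype.one_lt_card (α := F); omega)

variable [DecidableEq F]

lemma quadraticChar_neg_one_of_four_dvd (h4 : 4 ∣ Fintype.card F - 1) :
    quadraticChar F (-1) = 1 := by
  rw [quadraticChar_one_iff_isSquare (neg_ne_zero.2 one_ne_zero), FiniteField.isSquare_neg_one_iff]
  omega

lemma classCharSum_four_one (hα : IsPrimitiveElt α) (h4 : 4 ∣ Fintype.card F - 1) :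
    classCharSum α 4 1 = -classCharSum α 4 3 := by
  simpa using classCharSum_of_dvd_add (i := 3) (j := 1) hα (hα.ne_zero_of_four_dvd h4)
    (ringChar_ne_two_of_four_dvd h4) h4 (by decide)
    (quadraticChar_neg_one_of_four_dvd h4) (dvd_refl 4)

lemma classCharSum_four_zero_add_two (hα : IsPrimitiveElt α) (h4 : 4 ∣ Fintype.card F - 1) :
    classCharSum α 4 0 + classCharSum α 4 2 = -1 := by
  have hsum := sum_classCharSum hα (hα.ne_zero_of_four_dvd h4) (ringChar_ne_two_of_four_dvd h4)
    h4
  simp only [sum_range_succ, range_zero, sum_empty, classCharSum_four_one hα h4] at hsum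
  linarith

lemma sum_mul_quadraticChar_of_sq_eq_neg_one (hα : IsPrimitiveElt α)
    (h4 : 4 ∣ Fintype.card F - 1) {R : Type*} [CommRing R] (f : F →*₀ R)
    (hf : f α ^ 2 = -1) :
    ∑ x, f x * (quadraticChar F (1 - x) : ℤ) =
      classCharSum α 4 0 - classCharSum α 4 2 - 2 * f α * classCharSum α 4 3 := by
  have hf4 : f α ^ 4 = 1 := by linear_combination (f α ^ 2 - 1) * hf
  rw [sum_mul_quadraticChar_one_sub hα (hα.ne_zero_of_four_dvd h4) h4 f hf4]
  simp only [sum_range_succ, range_zero, sum_empty, classCharSum_four_one hα h4]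
  push_cast
  linear_combination (classCharSum α 4 2 + f α * classCharSum α 4 3 : R) * hf

lemma classCharSum_sub_emod_four (hα : IsPrimitiveElt α) (h8 : Fintype.card F % 8 = 5) :
    (classCharSum α 4 0 - classCharSum α 4 2) % 4 = 1 := by
  have h4 : 4 ∣ Fintype.card F - 1 := by omega
  have hα0 := hα.ne_zero_of_four_dvd h4
  have hcard := mul_card_cycClass hα hα0 h4 2
  have h1 : 1 ∉ cycClass α 4 2 := by
    rw [← pow_zero α, pow_mem_cycClass hα hα0 h4]
    decide
  have hpar : classCharSum α 4 2 % 2 = #(cycClass α 4 2) % 2 := classCharSum_modEq_card h1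
  have hsum := classCharSum_four_zero_add_two hα h4
  omega

/- The left-hand side is the norm of the Jacobi sum `J(χ, η)`, where `η` is the quadratic character
and `χ` the quartic one with `χ α = I`. -/
lemma sq_add_sq_classCharSum (hα : IsPrimitiveElt α) (h4 : 4 ∣ Fintype.card F - 1) :
    (classCharSum α 4 0 - classCharSum α 4 2) ^ 2 + (2 * classCharSum α 4 3) ^ 2 =
      Fintype.card F := by
  have hα0 := hα.ne_zero_of_four_dvd h4
  have hI : Complex.I ^ (Fintype.card F - 1) = 1 := by
    obtain ⟨k, hk⟩ := h4
    rw [hk, pow_mul, Complex.I_pow_four, one_pow]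
  obtain ⟨χ, hχ⟩ := hα.exists_mulChar_apply_eq hα0 hI
  have hχinv : χ⁻¹ α = -Complex.I := by rw [MulChar.inv_apply_eq_inv', hχ, Complex.inv_I]
  set η : MulChar F ℂ := (quadraticChar F).ringHomComp (Int.castRingHom ℂ) with hη
  have hηα : η α = -1 := by
    simp [hη, hα.quadraticChar_eq_neg_one hα0 (ringChar_ne_two_of_four_dvd h4)]
  have hηinv : η⁻¹ = η := ((quadraticChar_isQuadratic F).comp _).inv
  have hne {ψ : MulChar F ℂ} (h : ψ α ≠ 1) : ψ ≠ 1 := by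
    rintro rfl
    exact h (MulChar.one_apply hα0.isUnit)
  have hJ {ψ : MulChar F ℂ} (hψ : ψ α ^ 2 = -1) : jacobiSum ψ η =
      classCharSum α 4 0 - classCharSum α 4 2 - 2 * ψ α * classCharSum α 4 3 :=
    sum_mul_quadraticChar_of_sq_eq_neg_one hα h4 ψ.toMonoidWithZeroHom hψ
  have hchar : ringChar ℂ ≠ ringChar F := by
    rw [ringChar.eq_zero]
    exact (CharP.ringChar_ne_zero_of_finite F).symm
  have hnorm := jacobiSum_mul_jacobiSum_inv hchar (χ := χ) (φ := η)
    (hne (by simp [hχ, Complex.ext_iff])) (hne (by rw [hηα]; norm_num))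
    (hne (by simp [hχ, hηα, Complex.ext_iff]))
  rw [hηinv, hJ (by simp [hχ]), hJ (by simp [hχinv]), hχ, hχinv] at hnorm
  have hC : ((classCharSum α 4 0 - classCharSum α 4 2 : ℂ)) ^ 2 + (2 * classCharSum α 4 3) ^ 2 =
      Fintype.card F := by
    linear_combination hnorm + 4 * (classCharSum α 4 3 : ℂ) ^ 2 * Complex.I_sq
  exact_mod_cast hC

end QuarticSums

section ReductionModP

variable {F : Type*} [Field F] [Fintype F]

lemma sum_pow_of_ne_zero {n : ℕ} (hn : n ≠ 0) :
    ∑ x : F, x ^ n = if Fintype.card F - 1 ∣ n then -1 else 0 := by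
  classical
  rw [← FiniteField.sum_pow_units F n, Fintype.sum_eq_add_sum_subtype_ne _ 0, zero_pow hn, zero_add]
  exact (Equiv.sum_comp unitsEquivNeZero fun x : {x : F // x ≠ 0} => (x : F) ^ n).symm

lemma sum_pow_mul_one_sub_pow {a b : ℕ} (ha : 0 < a) (ha' : a ≤ Fintype.card F - 1)
    (hab : a + b < 2 * (Fintype.card F - 1)) :
    ∑ x : F, x ^ a * (1 - x) ^ b =
      -((-1) ^ (Fintype.card F - 1 - a) * b.choose (Fintype.card F - 1 - a)) := by
  set N := Fintype.card F - 1
  have hexpand (x : F) : x ^ a * (1 - x) ^ b =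
      ∑ j ∈ range (b + 1), (-1) ^ j * b.choose j * x ^ (a + j) := by
    rw [sub_eq_neg_add, add_pow, mul_sum]
    refine sum_congr rfl fun j _ => ?_
    rw [neg_pow, one_pow]
    ring
  have hdvd {j : ℕ} (hj : j ∈ range (b + 1)) : N ∣ a + j ↔ j = N - a := by
    rw [mem_range] at hj
    refine ⟨fun ⟨c, hc⟩ => ?_, fun h => ⟨1, by omega⟩⟩
    have hc1 : c = 1 := by nlinarith
    rw [hc1] at hc
    omega
  calc ∑ x : F, x ^ a * (1 - x) ^ b
      = ∑ j ∈ range (b + 1), (-1) ^ j * b.choose j * ∑ x : F, x ^ (a + j) := by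
        simp only [hexpand, mul_sum]
        exact sum_comm
    _ = ∑ j ∈ range (b + 1), if j = N - a then -((-1) ^ j * b.choose j : F) else 0 := by
        refine sum_congr rfl fun j hj => ?_
        rw [sum_pow_of_ne_zero (by omega)]
        simp only [N, hdvd hj]
        split_ifs <;> ring
    _ = -((-1) ^ (N - a) * b.choose (N - a)) := by
        rw [sum_ite_eq']
        split_ifs with h
        · rfl
        · rw [Nat.choose_eq_zero_of_lt (by rw [mem_range] at h; omega)]
          simp

lemma cast_classCharSum [DecidableEq F] {α : F} (hα : IsPrimitiveElt α) {k : ℕ}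
    (hF : Fintype.card F = 4 * k + 1) :
    (classCharSum α 4 0 - classCharSum α 4 2 + 2 * α ^ k * classCharSum α 4 3 : F) =
      -((-1) ^ k * (2 * k).choose k) := by
  have hk : 0 < k := by have := Fintype.one_lt_card (α := F); omega
  have h4 : 4 ∣ Fintype.card F - 1 := ⟨k, by omega⟩
  have hi : (α ^ k) ^ 2 = -1 := by
    rw [← pow_mul', hα.pow_eq_neg_one (n := 2 * k) (by omega)]
  have hcube : α ^ (3 * k) = -α ^ k := by
    rw [show 3 * k = k * 2 + k by ring, pow_add, pow_mul, hi, neg_one_mul]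
  have heval := sum_mul_quadraticChar_of_sq_eq_neg_one hα h4
    (powMonoidWithZeroHom (show 3 * k ≠ 0 by omega)) (by simp [hcube, hi])
  have hsum := sum_pow_mul_one_sub_pow (F := F) (a := 3 * k) (b := 2 * k) (by omega) (by omega)
    (by omega)
  simp only [powMonoidWithZeroHom_apply, hcube,
    quadraticChar_eq_pow_of_char_ne_two' (ringChar_ne_two_of_four_dvd h4),
    show Fintype.card F / 2 = 2 * k by omega, hsum,
    show Fintype.card F - 1 - 3 * k = k by omega] at heval
  rw [heval]
  ring

/- Every base-`p` digit of `k` is `(p - 1) / d ≤ (p - 1) / 2`, so `k + k` has no carries. -/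
lemma not_dvd_choose_two_mul {p m k d : ℕ} (hp : p.Prime) (hd : 2 ≤ d) (hpd : p ≡ 1 [MOD d])
    (hk : p ^ m = d * k + 1) : ¬ p ∣ (2 * k).choose k := by
  intro hdvd
  have hpow (i : ℕ) : ∃ a, p ^ i = d * a + 1 := by
    have hpos : 1 ≤ p ^ i := Nat.one_le_pow i p hp.pos
    have hmod : 1 ≡ p ^ i [MOD d] := by simpa using (hpd.pow i).symm
    obtain ⟨a, ha⟩ := (Nat.modEq_iff_dvd' hpos).1 hmod
    exact ⟨a, by omega⟩
  have hlog : Nat.log p (k + k) < m + 1 := by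
    refine (Nat.log_mono_right ?_).trans_lt ((Nat.log_pow hp.one_lt m).trans_lt m.lt_succ_self)
    nlinarith
  rw [two_mul] at hdvd
  have hcarry := hp.factorization_pos_of_dvd (Nat.choose_pos (Nat.le_add_left k k)).ne' hdvd
  rw [Nat.factorization_choose' hp hlog] at hcarry
  obtain ⟨i, hi⟩ := card_pos.1 hcarry
  simp only [mem_filter, mem_Ico] at hi
  obtain ⟨⟨-, him⟩, hi⟩ := hi
  obtain ⟨a, ha⟩ := hpow i
  obtain ⟨b, hb⟩ := hpow (m - i)
  have hdigits : k = a + p ^ i * b := by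
    have hsplit : p ^ i * p ^ (m - i) = d * k + 1 := by
      rw [← hk, ← pow_add, Nat.add_sub_cancel' (Nat.lt_succ_iff.1 him)]
    refine Nat.eq_of_mul_eq_mul_left (by omega : 0 < d) ?_
    rw [hb] at hsplit
    linarith
  have ha_lt : a + a < p ^ i := by nlinarith
  rw [hdigits, Nat.add_mul_mod_self_left, Nat.mod_eq_of_lt (by omega)] at hi
  omega

end ReductionModP

section TwoSquares

lemma eq_of_sq_add_sq_eq_of_isCoprime {q a b s t : ℤ} (hq : Odd q) (hst : q = s ^ 2 + t ^ 2)
    (hab : q = a ^ 2 + b ^ 2) (hs : s % 4 = 1) (ha : a % 4 = 1)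
    (hcop : IsCoprime q (a * t + b * s)) : b = t := by
  have hdvd : q ∣ a * t - b * s := by
    refine hcop.dvd_of_dvd_mul_left ⟨t ^ 2 - b ^ 2, ?_⟩
    linear_combination b ^ 2 * hst - t ^ 2 * hab
  obtain ⟨u, hu⟩ := hdvd
  have hq0 : q ≠ 0 := by
    rintro rfl
    exact absurd hq (by decide)
  have hnorm : (q * u) ^ 2 + (a * s + b * t) ^ 2 = q ^ 2 := by
    rw [← hu]
    linear_combination (-q) * hst - (s ^ 2 + t ^ 2) * hab
  have hu_even : Even u := by
    have heven {x y : ℤ} (hxy : q = x ^ 2 + y ^ 2) (hx : x % 4 = 1) : Even y := by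
      rw [hxy, Int.odd_add, Int.even_pow' two_ne_zero] at hq
      exact hq.1 (Int.odd_iff.2 (by omega)).pow
    have := hu ▸ ((heven hst hs).mul_left a).sub ((heven hab ha).mul_right s)
    exact (Int.even_mul.1 this).resolve_left (Int.not_even_iff_odd.2 hq)
  have hu0 : u = 0 := by
    have hu1 : u ^ 2 ≤ 1 := by
      refine le_of_mul_le_mul_left ?_ (sq_pos_of_ne_zero hq0)
      nlinarith [sq_nonneg (a * s + b * t)]
    obtain ⟨v, rfl⟩ := hu_even
    have : v ^ 2 = 0 := by nlinarith [sq_nonneg v]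
    simp [pow_eq_zero_iff two_ne_zero |>.1 this]
  have hab' : a * t = b * s := by simpa [hu0, sub_eq_zero] using hu
  have hw : a * s + b * t = q ∨ a * s + b * t = -q :=
    eq_or_eq_neg_of_sq_eq_sq _ _ (by simpa [hu0] using hnorm)
  have hmul : a * (a * s + b * t) = q * s := by linear_combination b * hab' - s * hab
  have has : a = s := by
    obtain hw | hw := hw
    · rw [hw] at hmul
      exact mul_left_cancel₀ hq0 (by linear_combination hmul)
    · rw [hw] at hmul
      have : a = -s := mul_left_cancel₀ hq0 (by linear_combination -hmul)
      omega
  rw [has, mul_comm] at hab'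
  exact (mul_right_cancel₀ (by rintro rfl; omega) hab').symm

end TwoSquares

section QuarticDifferences

variable {F : Type*} [Field F] [Fintype F] {α : F}

lemma neg_eq_pow_smul (hα : IsPrimitiveElt α) (h2 : 2 ∣ Fintype.card F - 1) :
    (Neg.neg : F → F) = (α ^ ((Fintype.card F - 1) / 2) • ·) := by
  have := Fintype.card_pos (α := F)
  funext x
  rw [hα.pow_eq_neg_one (by omega), neg_smul, one_smul]

variable [DecidableEq F]

lemma map_pow_smul_extDiff_cycClass (hα0 : α ≠ 0) (e i j n : ℕ) :
    (extDiff (cycClass α e i) (cycClass α e j)).map (α ^ n • ·) =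
      extDiff (cycClass α e (i + n)) (cycClass α e (j + n)) := by
  rw [← extDiff_smul (pow_ne_zero n hα0), pow_smul_cycClass, pow_smul_cycClass]

lemma map_pow_smul_intDiff_cycClass (hα0 : α ≠ 0) (e i n : ℕ) :
    (intDiff (cycClass α e i)).map (α ^ n • ·) = intDiff (cycClass α e (i + n)) := by
  rw [← intDiff_smul (pow_ne_zero n hα0), pow_smul_cycClass]

lemma cycClass_four_add_half (hα : IsPrimitiveElt α) (h8 : Fintype.card F % 8 = 5) (i : ℕ) :
    cycClass α 4 (i + (Fintype.card F - 1) / 2) = cycClass α 4 (i + 2) :=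
  cycClass_congr hα (hα.ne_zero (by omega)) (by omega)
    (Nat.ModEq.add_left i (show _ % 4 = 2 % 4 by omega))

lemma extDiff_cycClass_four_swap (hα : IsPrimitiveElt α) (h8 : Fintype.card F % 8 = 5) (i j : ℕ) :
    extDiff (cycClass α 4 j) (cycClass α 4 i) =
      (extDiff (cycClass α 4 i) (cycClass α 4 j)).map (α ^ 2 • ·) := by
  have hα0 := hα.ne_zero (by omega)
  rw [extDiff_swap, neg_eq_pow_smul hα (by omega), map_pow_smul_extDiff_cycClass hα0,
    map_pow_smul_extDiff_cycClass hα0, cycClass_four_add_half hα h8, cycClass_four_add_half hα h8]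

lemma intDiff_cycClass_four_add_two (hα : IsPrimitiveElt α) (h8 : Fintype.card F % 8 = 5)
    (i : ℕ) : intDiff (cycClass α 4 (i + 2)) = intDiff (cycClass α 4 i) := by
  rw [← map_neg_intDiff (cycClass α 4 i), neg_eq_pow_smul hα (by omega),
    map_pow_smul_intDiff_cycClass (hα.ne_zero (by omega)), cycClass_four_add_half hα h8]

lemma card_cycClass_four (hα : IsPrimitiveElt α) (h8 : Fintype.card F % 8 = 5) (i : ℕ) :
    #(cycClass α 4 i) = (Fintype.card F - 1) / 4 := by
  have := mul_card_cycClass hα (hα.ne_zero (by omega)) (e := 4) (by omega) i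
  omega

lemma disjoint_cycClass_four_zero_three (hα : IsPrimitiveElt α) (h8 : Fintype.card F % 8 = 5) :
    Disjoint (cycClass α 4 0) (cycClass α 4 3) :=
  disjoint_cycClass hα (hα.ne_zero (by omega)) (by omega) (by decide)

lemma intDiff_add_intDiff_cycClass_four (hα : IsPrimitiveElt α) (h8 : Fintype.card F % 8 = 5) :
    intDiff (cycClass α 4 0) + intDiff (cycClass α 4 3) =
      ((Fintype.card F - 5) / 8) • (Gstar F).val := by
  have hα0 := hα.ne_zero (by omega)
  set N := intDiff (cycClass α 4 0) + intDiff (cycClass α 4 3) with hN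
  have hinv : N.map (α ^ 1 • ·) = N := by
    rw [hN, Multiset.map_add, map_pow_smul_intDiff_cycClass hα0,
      map_pow_smul_intDiff_cycClass hα0, ← intDiff_cycClass_four_add_two hα h8 (0 + 1),
      cycClass_congr hα hα0 (e := 4) (by omega) (show 3 + 1 ≡ 0 [MOD 4] from rfl), add_comm]
  have h0 : 0 ∉ N := by simp [hN, zero_notMem_intDiff]
  have hclass : cycClass α 1 0 = Gstar F := by simpa using biUnion_cycClass hα hα0 (one_dvd _)
  have hNeq : N = N.count 1 • (Gstar F).val := by
    simpa [hclass] using eq_sum_count_nsmul_cycClass hα hα0 (one_dvd _) h0 hinv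
  have hcard : Multiset.card N = N.count 1 * (Fintype.card F - 1) := by
    conv_lhs => rw [hNeq]
    simp [Gstar]
  rw [hN, Multiset.card_add, card_intDiff, card_intDiff, card_cycClass_four hα h8,
    card_cycClass_four hα h8, ← hN] at hcard
  obtain ⟨l, hl⟩ : ∃ l, Fintype.card F = 8 * l + 5 := ⟨Fintype.card F / 8, by omega⟩
  have hcount : N.count 1 = l := by
    rw [hl, show (8 * l + 5 - 1) / 4 = 2 * l + 1 by omega, ← Nat.mul_sub_one,
      Nat.add_sub_cancel, show 8 * l + 5 - 1 = 4 * (2 * l + 1) by omega] at hcard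
    nlinarith
  rw [hNeq, hcount, hl, show (8 * l + 5 - 5) / 8 = l by omega]

lemma isDDF_cycClass_four (hα : IsPrimitiveElt α) (h8 : Fintype.card F % 8 = 5) :
    IsDDF ![cycClass α 4 0, cycClass α 4 3] (Fintype.card F) 2
      (fun _ => (Fintype.card F - 1) / 4) ((Fintype.card F - 5) / 8) :=
  have hα0 := hα.ne_zero (by omega)
  isDDF_pair (zero_notMem_cycClass hα0) (zero_notMem_cycClass hα0) (card_cycClass_four hα h8 0)
    (card_cycClass_four hα h8 3) (disjoint_cycClass_four_zero_three hα h8)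
    (intDiff_add_intDiff_cycClass_four hα h8)

lemma Gstar_sdiff_cycClass_two (hα : IsPrimitiveElt α) (h2 : 2 ∣ Fintype.card F - 1)
    (hα0 : α ≠ 0) : Gstar F \ cycClass α 2 0 = cycClass α 2 1 := by
  rw [← biUnion_cycClass hα hα0 h2, show range 2 = {0, 1} from rfl, biUnion_insert,
    singleton_biUnion, union_sdiff_cancel_left (disjoint_cycClass hα hα0 h2 (by decide))]

lemma sum_quadraticChar_sub (hα : IsPrimitiveElt α) (hα0 : α ≠ 0) (hF : ringChar F ≠ 2) {e : ℕ}
    (he : e ∣ Fintype.card F - 1) (heven : Even e) (j : ℕ) {x : F} (hx : x ∈ cycClass α e 0) :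
    ∑ y ∈ cycClass α e j, quadraticChar F (x - y) = classCharSum α e j := by
  obtain ⟨n, rfl⟩ := (mem_cycClass hα0).1 hx
  set x := α ^ (e * n + 0)
  have hx0 : x ≠ 0 := pow_ne_zero _ hα0
  have hsmul : x • cycClass α e j = cycClass α e j := by
    rw [pow_smul_cycClass]
    exact cycClass_congr hα hα0 he (by simp [Nat.ModEq])
  calc ∑ y ∈ cycClass α e j, quadraticChar F (x - y)
      = ∑ y ∈ x • cycClass α e j, quadraticChar F (x - y) := by rw [hsmul]
    _ = ∑ y ∈ cycClass α e j, quadraticChar F (x - x • y) := by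
        rw [← image_smul, sum_image (MulAction.injective₀ hx0).injOn]
    _ = classCharSum α e j := by
        refine sum_congr rfl fun y _ => ?_
        rw [smul_eq_mul, ← mul_one_sub, map_mul, quadraticChar_of_mem_cycClass hα hα0 hF heven hx,
          pow_zero, one_mul]

lemma sum_map_quadraticChar_extDiff (hα : IsPrimitiveElt α) (h8 : Fintype.card F % 8 = 5) :
    ((extDiff (cycClass α 4 0) (cycClass α 4 3) +
        extDiff (cycClass α 4 3) (cycClass α 4 0)).map (quadraticChar F)).sum =
      2 * ((Fintype.card F - 1) / 4 : ℕ) * classCharSum α 4 3 := by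
  have h4 : 4 ∣ Fintype.card F - 1 := by omega
  have hα0 := hα.ne_zero_of_four_dvd h4
  have hsum : ((extDiff (cycClass α 4 0) (cycClass α 4 3)).map (quadraticChar F)).sum =
      ((Fintype.card F - 1) / 4 : ℕ) * classCharSum α 4 3 := by
    rw [sum_map_extDiff, sum_congr rfl fun x hx => sum_quadraticChar_sub hα hα0
      (ringChar_ne_two_of_four_dvd h4) h4 (by decide) 3 hx, sum_const, card_cycClass_four hα h8,
      nsmul_eq_mul]
  have hneg (x : F) : quadraticChar F (-x) = quadraticChar F x := by
    rw [← neg_one_mul, map_mul, quadraticChar_neg_one_of_four_dvd h4, one_mul]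
  rw [extDiff_swap (cycClass α 4 0), Multiset.map_add, Multiset.map_map, Multiset.sum_add]
  simp only [Function.comp_def, hneg, hsum]
  ring

lemma sum_quadraticChar_cycClass (hα : IsPrimitiveElt α) (hα0 : α ≠ 0) (hF : ringChar F ≠ 2)
    {e : ℕ} (he : Even e) (i : ℕ) :
    ∑ x ∈ cycClass α e i, quadraticChar F x = (-1) ^ i * #(cycClass α e i) := by
  rw [sum_congr rfl fun x hx => quadraticChar_of_mem_cycClass hα hα0 hF he hx, sum_const,
    nsmul_eq_mul, mul_comm]

lemma card_cycClass_two (hα : IsPrimitiveElt α) (h8 : Fintype.card F % 8 = 5) (i : ℕ) :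
    #(cycClass α 2 i) = 2 * ((Fintype.card F - 1) / 4) := by
  have := mul_card_cycClass hα (hα.ne_zero (by omega)) (e := 2) (by omega) i
  omega

lemma exists_extDiff_add_extDiff_eq (hα : IsPrimitiveElt α) (h8 : Fintype.card F % 8 = 5) :
    ∃ lam mu : ℕ,
      extDiff (cycClass α 4 0) (cycClass α 4 3) + extDiff (cycClass α 4 3) (cycClass α 4 0) =
        lam • (cycClass α 2 0).val + mu • (cycClass α 2 1).val := by
  have hdisj := disjoint_cycClass_four_zero_three hα h8
  refine ⟨_, _, (eq_sum_count_nsmul_cycClass (e := 2) hα (hα.ne_zero (by omega)) (by omega) ?_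
    ?_).trans (by simp only [sum_range_succ, range_zero, sum_empty, zero_add]; rfl)⟩
  · simp [zero_notMem_extDiff hdisj, zero_notMem_extDiff hdisj.symm]
  · rw [Multiset.map_add, ← extDiff_cycClass_four_swap hα h8, ← extDiff_cycClass_four_swap hα h8,
      add_comm]

lemma extDiff_coefficients (hα : IsPrimitiveElt α) (h8 : Fintype.card F % 8 = 5) {lam mu : ℕ}
    (h : extDiff (cycClass α 4 0) (cycClass α 4 3) + extDiff (cycClass α 4 3) (cycClass α 4 0) =
      lam • (cycClass α 2 0).val + mu • (cycClass α 2 1).val) :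
    (8 * lam : ℤ) = Fintype.card F - 1 + 4 * classCharSum α 4 3 ∧
      (8 * mu : ℤ) = Fintype.card F - 1 - 4 * classCharSum α 4 3 := by
  have hα0 := hα.ne_zero (by omega)
  have hF := ringChar_ne_two_of_four_dvd (F := F) (by omega)
  have hcard := congrArg Multiset.card h
  have hsum := sum_map_quadraticChar_extDiff hα h8
  obtain ⟨k, hk⟩ : ∃ k, Fintype.card F = 4 * k + 1 := ⟨Fintype.card F / 4, by omega⟩
  have hk0 : (k : ℤ) ≠ 0 := by omega
  have hk4 : (Fintype.card F - 1) / 4 = k := by omega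
  simp only [Multiset.card_add, card_extDiff, Multiset.card_nsmul, card_val,
    card_cycClass_four hα h8, card_cycClass_two hα h8, hk4] at hcard
  have hηsum (i : ℕ) : ((cycClass α 2 i).val.map (quadraticChar F)).sum = (-1) ^ i * (2 * k) := by
    refine (sum_quadraticChar_cycClass hα hα0 hF even_two i).trans ?_
    rw [card_cycClass_two hα h8, hk4]
    push_cast
    rfl
  rw [h, Multiset.map_add, Multiset.map_nsmul, Multiset.map_nsmul, Multiset.sum_add,
    Multiset.sum_nsmul, Multiset.sum_nsmul, hηsum, hηsum, hk4] at hsum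
  have hadd : (lam + mu : ℤ) = k := by
    zify at hcard
    exact mul_left_cancel₀ hk0 (by linarith)
  have hsub : (lam - mu : ℤ) = classCharSum α 4 3 := by
    refine mul_left_cancel₀ hk0 ?_
    simp only [nsmul_eq_mul] at hsum
    linarith
  rw [hk]
  push_cast
  constructor <;> linarith

lemma exists_isEPDF_cycClass_four (hα : IsPrimitiveElt α) (h8 : Fintype.card F % 8 = 5) :
    ∃ lam mu : ℕ, (8 * lam : ℤ) = Fintype.card F - 1 + 4 * classCharSum α 4 3 ∧
      (8 * mu : ℤ) = Fintype.card F - 1 - 4 * classCharSum α 4 3 ∧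
      IsEPDF ![cycClass α 4 0, cycClass α 4 3] (Fintype.card F) 2
        (fun _ => (Fintype.card F - 1) / 4) (cycClass α 2 0) lam mu := by
  have hα0 := hα.ne_zero (by omega)
  obtain ⟨lam, mu, hΔ⟩ := exists_extDiff_add_extDiff_eq hα h8
  obtain ⟨hlam, hmu⟩ := extDiff_coefficients hα h8 hΔ
  rw [← Gstar_sdiff_cycClass_two hα (by omega) hα0] at hΔ
  exact ⟨lam, mu, hlam, hmu, isEPDF_pair (zero_notMem_cycClass hα0) (zero_notMem_cycClass hα0)
    (card_cycClass_four hα h8 0) (card_cycClass_four hα h8 3)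
    (disjoint_cycClass_four_zero_three hα h8) hΔ⟩

end QuarticDifferences

section KatreRajwade

lemma mod_four_eq_one_of_dvd_sq_add_sq {p : ℕ} (hp : p.Prime) (hp2 : p ≠ 2) {s t : ℤ}
    (hdvd : (p : ℤ) ∣ s ^ 2 + t ^ 2) (hs : ¬ (p : ℤ) ∣ s) : p % 4 = 1 := by
  have := Fact.mk hp
  have hs0 : (s : ZMod p) ≠ 0 := by rwa [Ne, ZMod.intCast_zmod_eq_zero_iff_dvd]
  have hst : (s : ZMod p) ^ 2 = -(t : ZMod p) ^ 2 := by
    rw [eq_neg_iff_add_eq_zero]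
    exact_mod_cast (ZMod.intCast_zmod_eq_zero_iff_dvd _ p).2 hdvd
  have hp3 := ZMod.mod_four_ne_three_of_sq_eq_neg_sq hs0 hst
  have hodd := hp.eq_two_or_odd.resolve_left hp2
  omega

variable {F : Type*} [Field F] [Fintype F] [DecidableEq F] {α : F} {p m : ℕ} {s t : ℤ}

lemma isCoprime_card_of_mul_pow_eq (hp : p.Prime) (hpm : Fintype.card F = p ^ m)
    (h8 : Fintype.card F % 8 = 5) (hα : IsPrimitiveElt α)
    (hst : (Fintype.card F : ℤ) = s ^ 2 + t ^ 2) (hps : ¬ (p : ℤ) ∣ s)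
    (ht : (t : F) * α ^ ((Fintype.card F - 1) / 4) = s) :
    IsCoprime (Fintype.card F : ℤ)
      ((classCharSum α 4 0 - classCharSum α 4 2) * t + 2 * classCharSum α 4 3 * s) := by
  have := Fact.mk hp
  have := charP_of_card_eq_prime_pow hpm
  obtain ⟨k, hk⟩ : ∃ k, Fintype.card F = 4 * k + 1 := ⟨Fintype.card F / 4, by omega⟩
  have hm : m ≠ 0 := by
    rintro rfl
    rw [pow_zero] at hpm
    omega
  have hpdvd : p ∣ Fintype.card F := hpm ▸ dvd_pow_self p hm
  have hp4 : p % 4 = 1 := by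
    refine mod_four_eq_one_of_dvd_sq_add_sq hp ?_ (hst ▸ Int.natCast_dvd_natCast.2 hpdvd) hps
    rintro rfl
    omega
  have hchoose : ((2 * k).choose k : F) ≠ 0 := by
    rw [Ne, CharP.cast_eq_zero_iff F p]
    exact not_dvd_choose_two_mul hp (by norm_num : 2 ≤ 4) hp4 (hpm.symm.trans hk)
  rw [show (Fintype.card F - 1) / 4 = k by omega] at ht
  have ht0 : (t : F) ≠ 0 := by
    intro h0
    rw [h0, zero_mul, eq_comm, CharP.intCast_eq_zero_iff F p] at ht
    exact hps ht
  rw [hpm, Nat.cast_pow]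
  refine ((Nat.prime_iff_prime_int.1 hp).coprime_iff_not_dvd.2 ?_).pow_left
  rw [← CharP.intCast_eq_zero_iff F p]
  push_cast
  have hcast : ((classCharSum α 4 0 - classCharSum α 4 2) * t + 2 * classCharSum α 4 3 * s : F) =
      -(t * ((-1) ^ k * (2 * k).choose k)) := by
    rw [← ht]
    linear_combination (t : F) * cast_classCharSum hα hk
  rw [hcast]
  exact neg_ne_zero.2 (mul_ne_zero ht0 (mul_ne_zero (pow_ne_zero k (by simp)) hchoose))

lemma two_mul_classCharSum_eq (hp : p.Prime) (hpm : Fintype.card F = p ^ m)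
    (h8 : Fintype.card F % 8 = 5) (hα : IsPrimitiveElt α)
    (hst : (Fintype.card F : ℤ) = s ^ 2 + t ^ 2) (hps : ¬ (p : ℤ) ∣ s) (hs4 : s % 4 = 1)
    (ht : (t : F) * α ^ ((Fintype.card F - 1) / 4) = s) : 2 * classCharSum α 4 3 = t :=
  eq_of_sq_add_sq_eq_of_isCoprime (Int.odd_iff.2 (by omega)) hst
    (sq_add_sq_classCharSum hα (by omega)).symm hs4 (classCharSum_sub_emod_four hα h8)
    (isCoprime_card_of_mul_pow_eq hp hpm h8 hα hst hps ht)

end KatreRajwade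

theorem stmt_11_general {F : Type*} [Field F] [Fintype F] [DecidableEq F]
    (q p m : ℕ) (hp : p.Prime) (hq : Fintype.card F = q) (hqpm : q = p ^ m)
    (hq8 : q % 8 = 5)
    (α : F) (hα : IsPrimitiveElt α)
    (s t : ℤ) (hst : (q : ℤ) = s ^ 2 + t ^ 2)
    (hps : ¬((p : ℤ) ∣ s)) (hs4 : s % 4 = 1)
    (ht : (t : F) * α ^ ((q - 1) / 4) = (s : F)) :
    (∃ lam mu : ℕ, (8 * lam : ℤ) = q - 1 + 2 * t ∧ (8 * mu : ℤ) = q - 1 - 2 * t ∧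
      IsEPDF ![cycClass α 4 0, cycClass α 4 3] q 2 (fun _ => (q - 1) / 4)
        (cycClass α 2 0) lam mu) ∧
    IsDDF ![cycClass α 4 0, cycClass α 4 3] q 2 (fun _ => (q - 1) / 4)
      ((q - 5) / 8) := by
  subst hq
  have hS : 2 * classCharSum α 4 3 = t := two_mul_classCharSum_eq hp hqpm hq8 hα hst hps hs4 ht
  obtain ⟨lam, mu, hlam, hmu, hEPDF⟩ := exists_isEPDF_cycClass_four hα hq8
  exact ⟨⟨lam, mu, by rw [hlam, ← hS]; ring, by rw [hmu, ← hS]; ring, hEPDF⟩,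
    isDDF_cycClass_four hα hq8⟩

/-- For a prime power `q = p^m ≡ 5 (mod 8)` with Katre–Rajwade normalized
representation `q = s² + t²`, the family `D = {C_0^4, C_3^4}` is:
(i) if `t = -2`, a `(q,2,(q-1)/4;(q-5)/8,(q+3)/8)`-EPDF relative to `C_0^2` and a
`(q,2,(q-1)/4,(q-5)/8)`-DDF;
(ii) if `t = 2`, a `(q,2,(q-1)/4;(q+3)/8,(q-5)/8)`-EPDF relative to `C_0^2` and a
`(q,2,(q-1)/4,(q-5)/8)`-DDF. -/
theorem stmt_11 {F : Type*} [Field F] [Fintype F] [DecidableEq F]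
    (q p m : ℕ) (hp : p.Prime) (hq : Fintype.card F = q) (hqpm : q = p ^ m)
    (hq8 : q % 8 = 5)
    (α : F) (hα : IsPrimitiveElt α)
    (s t : ℤ) (hst : (q : ℤ) = s ^ 2 + t ^ 2)
    (hps : ¬((p : ℤ) ∣ s)) (hs4 : s % 4 = 1)
    (ht : (t : F) * α ^ ((q - 1) / 4) = (s : F)) :
    (t = -2 →
      IsEPDF ![cycClass α 4 0, cycClass α 4 3] q 2 (fun _ => (q - 1) / 4)
        (cycClass α 2 0) ((q - 5) / 8) ((q + 3) / 8) ∧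
      IsDDF ![cycClass α 4 0, cycClass α 4 3] q 2 (fun _ => (q - 1) / 4)
        ((q - 5) / 8)) ∧
    (t = 2 →
      IsEPDF ![cycClass α 4 0, cycClass α 4 3] q 2 (fun _ => (q - 1) / 4)
        (cycClass α 2 0) ((q + 3) / 8) ((q - 5) / 8) ∧
      IsDDF ![cycClass α 4 0, cycClass α 4 3] q 2 (fun _ => (q - 1) / 4)
        ((q - 5) / 8)) := by
  obtain ⟨⟨lam, mu, hlam, hmu, hEPDF⟩, hDDF⟩ :=
    stmt_11_general q p m hp hq hqpm hq8 α hα s t hst hps hs4 ht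
  constructor <;> rintro rfl <;> exact ⟨by convert hEPDF <;> omega, hDDF⟩
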